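/- (Birman–Series phenomenon.) Let π : ℝ → AddCircle ∂Φ be the quotient map and let X̄_∞ ⊆ AddCircle ∂Φ be the closure of ⋃_{p irrational} π([X^L_∞(p), X^R_∞(p)]), the union over all irrational paths p of the images of the closed real intervals [X^L_∞(p), X^R_∞(p)]. Then the Haar measure λ on AddCircle ∂Φ, normalized to have total mass ∂Φ, satisfies λ(X̄_∞) = 2 · Error(Φ). -/

import Mathlib

noncomputable section
open Filter Topology Classical MeasureTheory

/-- Lexicographic strict order on infinite paths. -/
def PathLt {N : ℕ} (p q : Fin N × (ℕ → Bool)) : Prop :=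
  p.1 < q.1 ∨ (p.1 = q.1 ∧ ∃ n : ℕ, (∀ k < n, p.2 k = q.2 k) ∧ p.2 n = false ∧ q.2 n = true)

/-- Lexicographic strict order on positive edges (compared within a sphere `S(n)`). -/
def EdgeLt {N : ℕ} (e f : Fin N × List Bool) : Prop :=
  e.1 < f.1 ∨ (e.1 = f.1 ∧ List.Lex (· < ·) e.2 f.2)

/-- The word `[s 0, …, s (m-1)]` of length `m`. -/
def word (s : ℕ → Bool) (m : ℕ) : List Bool := List.ofFn (fun k : Fin m => s k.val)

/-- The constant Boolean sequence `c^∞`. -/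
def constSeq (c : Bool) : ℕ → Bool := fun _ => c

/-- The Boolean sequence `w ++ [b] ++ c^∞`. -/
def extendSeq (w : List Bool) (b c : Bool) : ℕ → Bool := fun n =>
  if h : n < w.length then w.get ⟨n, h⟩ else if n = w.length then b else c

/-- A path is rational iff its Boolean sequence is eventually constant. -/
def RationalPath {N : ℕ} (p : Fin N × (ℕ → Bool)) : Prop :=
  ∃ (c : Bool) (m : ℕ), ∀ n ≥ m, p.2 n = c

/-- `Y (i, v)` for an edge of `S (m+1)`: `Y_n(e) = Φ(e)/2 + ∑_{f ∈ S(n), f < e} Φ(f)`. -/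
def Y {N : ℕ} (Φ : Fin N → List Bool → ℝ) (m : ℕ) (i : Fin N) (v : Fin m → Bool) : ℝ :=
  Φ i (List.ofFn v) / 2 +
    ∑ x : Fin N × (Fin m → Bool),
      if EdgeLt (x.1, List.ofFn x.2) (i, List.ofFn v) then Φ x.1 (List.ofFn x.2) else 0

/-- `X_n(p) = Y_n(p^n)`; here `m = n - 1` is the word length of the `n`-th edge. -/
def X {N : ℕ} (Φ : Fin N → List Bool → ℝ) (m : ℕ) (p : Fin N × (ℕ → Bool)) : ℝ :=
  Y Φ m p.1 (fun k => p.2 k.val)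

/-- `X_∞(p) = lim_n X_n(p)` (the limit exists for every path). -/
def Xinf {N : ℕ} (Φ : Fin N → List Bool → ℝ) (p : Fin N × (ℕ → Bool)) : ℝ :=
  limUnder atTop (fun m => X Φ m p)

/-- `Φ_∞(p) = lim_n Φ(p^n)`. -/
def PhiInf {N : ℕ} (Φ : Fin N → List Bool → ℝ) (p : Fin N × (ℕ → Bool)) : ℝ :=
  limUnder atTop (fun m => Φ p.1 (word p.2 m))

/-- `X^L_∞(p) = sup {X_∞(q) : q < p}`. -/
def XL {N : ℕ} (Φ : Fin N → List Bool → ℝ) (p : Fin N × (ℕ → Bool)) : ℝ :=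
  sSup (Xinf Φ '' {q | PathLt q p})

/-- `X^R_∞(p) = inf {X_∞(q) : q > p}`. -/
def XR {N : ℕ} (Φ : Fin N → List Bool → ℝ) (p : Fin N × (ℕ → Bool)) : ℝ :=
  sInf (Xinf Φ '' {q | PathLt p q})

/-- The gap of the complementary region labelled by the edge `(i, w)`:
`Gap_Φ(i,w) = (Φ_∞((i, w ++ [false] ++ true^∞)) + Φ_∞((i, w ++ [true] ++ false^∞)))/2`. -/
def GapPhi {N : ℕ} (Φ : Fin N → List Bool → ℝ) (i : Fin N) (w : List Bool) : ℝ :=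
  (PhiInf Φ (i, extendSeq w false true) + PhiInf Φ (i, extendSeq w true false)) / 2

/-- The total gap `Gap(Φ)`: the sum of `Gap_Φ` over all edge-labelled complementary
regions plus the contribution of the `N` root regions. -/
def TotalGap {N : ℕ} (Φ : Fin N → List Bool → ℝ) : ℝ :=
  (∑' x : Fin N × List Bool, GapPhi Φ x.1 x.2) +
    (1/2) * ∑ i : Fin N, (PhiInf Φ (i, constSeq true) + PhiInf Φ (i, constSeq false))

/-- The closed set `X̄_∞ ⊆ ℝ/∂Φℤ`: the closure of the union, over the irrational
paths `p`, of the images of the closed intervals `[X^L_∞(p), X^R_∞(p)]`. -/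
def XbarInf {N : ℕ} (Φ : Fin N → List Bool → ℝ) :
    Set (AddCircle (∑ i : Fin N, Φ i [])) :=
  closure (⋃ p ∈ {p : Fin N × (ℕ → Bool) | ¬ RationalPath p},
    (fun x : ℝ => (x : AddCircle (∑ i : Fin N, Φ i []))) '' Set.Icc (XL Φ p) (XR Φ p))

lemma bs_cover_zero : ∀ (n : ℕ) (f : Fin n → ℝ) (x : ℝ), 0 < n → 0 ≤ x → x ≤ ∑ j, f j →
    ∃ i : Fin n, (∑ j, if j < i then f j else 0) ≤ x ∧
      x ≤ (∑ j, if j < i then f j else 0) + f i := by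
  intro n
  induction n with
  | zero => intro f x h; omega
  | succ n ih =>
    intro f x _ h0 hx
    rw [Fin.sum_univ_castSucc] at hx
    by_cases hn : 0 < n ∧ x ≤ ∑ j : Fin n, f j.castSucc
    · obtain ⟨i, h1, h2⟩ := ih (fun j => f j.castSucc) x hn.1 h0 hn.2
      refine ⟨i.castSucc, ?_⟩
      rw [Fin.sum_univ_castSucc]
      simp only [Fin.castSucc_lt_castSucc_iff, (Fin.castSucc_lt_last i).not_gt, if_false, add_zero]
      exact ⟨h1, h2⟩
    · refine ⟨Fin.last n, ?_⟩
      rw [Fin.sum_univ_castSucc]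
      simp only [Fin.castSucc_lt_last, if_true, lt_irrefl, if_false, add_zero]
      refine ⟨?_, hx⟩
      rcases Nat.eq_zero_or_pos n with h | h
      · subst h; simpa using h0
      · by_contra hc
        exact hn ⟨h, by linarith⟩

lemma bs_lex_append (u v : List Bool) (b c : Bool) (h : u.length = v.length) :
    List.Lex (· < ·) (u ++ [b]) (v ++ [c]) ↔
      List.Lex (· < ·) u v ∨ (u = v ∧ b = false ∧ c = true) := by
  induction u generalizing v with
  | nil =>
    cases v with
    | nil => cases b <;> cases c <;> simp [List.cons_lex_cons_iff]
    | cons a v => simp at h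
  | cons a u ih =>
    cases v with
    | nil => simp at h
    | cons a' v =>
      simp only [List.length_cons, Nat.add_right_cancel_iff] at h
      simp only [List.cons_append, List.cons_lex_cons_iff, ih v h, List.cons.injEq]
      tauto

lemma bs_lex_irrefl (u : List Bool) : ¬ List.Lex (· < ·) u u := by
  induction u with
  | nil => simp
  | cons a u ih => simp [List.cons_lex_cons_iff, ih]

lemma bs_edge_append {N : ℕ} (i j : Fin N) (u v : List Bool) (b c : Bool)
    (h : u.length = v.length) :
    EdgeLt (i, u ++ [b]) (j, v ++ [c]) ↔
      EdgeLt (i, u) (j, v) ∨ (i = j ∧ u = v ∧ b = false ∧ c = true) := by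
  simp only [EdgeLt, bs_lex_append u v b c h]
  tauto

lemma bs_word_succ (s : ℕ → Bool) (m : ℕ) : word s (m+1) = word s m ++ [s m] := by
  unfold word
  rw [List.ofFn_succ_last]
  simp

lemma bs_word_length (s : ℕ → Bool) (m : ℕ) : (word s m).length = m := by simp [word]

lemma bs_word_congr (s t : ℕ → Bool) (m : ℕ) (h : ∀ k < m, s k = t k) : word s m = word t m := by
  unfold word
  congr 1
  funext k
  exact h k k.2

/-- value along path -/
def bsF {N : ℕ} (Φ : Fin N → List Bool → ℝ) (m : ℕ) (p : Fin N × (ℕ → Bool)) : ℝ :=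
  Φ p.1 (word p.2 m)

/-- left endpoint -/
def bsL {N : ℕ} (Φ : Fin N → List Bool → ℝ) (m : ℕ) (p : Fin N × (ℕ → Bool)) : ℝ :=
  ∑ x : Fin N × (Fin m → Bool),
      if EdgeLt (x.1, List.ofFn x.2) (p.1, word p.2 m) then Φ x.1 (List.ofFn x.2) else 0

lemma bs_X {N : ℕ} (Φ : Fin N → List Bool → ℝ) (m : ℕ) (p : Fin N × (ℕ → Bool)) :
    X Φ m p = bsF Φ m p / 2 + bsL Φ m p := rfl

lemma bsL_congr {N : ℕ} (Φ : Fin N → List Bool → ℝ) (m : ℕ) (p q : Fin N × (ℕ → Bool))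
    (h1 : p.1 = q.1) (h : ∀ k < m, p.2 k = q.2 k) : bsL Φ m p = bsL Φ m q := by
  unfold bsL
  rw [h1, bs_word_congr _ _ m h]

lemma bsF_congr {N : ℕ} (Φ : Fin N → List Bool → ℝ) (m : ℕ) (p q : Fin N × (ℕ → Bool))
    (h1 : p.1 = q.1) (h : ∀ k < m, p.2 k = q.2 k) : bsF Φ m p = bsF Φ m q := by
  unfold bsF
  rw [h1, bs_word_congr _ _ m h]

lemma bsL_zero {N : ℕ} (Φ : Fin N → List Bool → ℝ) (p : Fin N × (ℕ → Bool)) :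
    bsL Φ 0 p = ∑ j : Fin N, if j < p.1 then Φ j [] else 0 := by
  unfold bsL
  rw [Fintype.sum_prod_type]
  refine Finset.sum_congr rfl fun j _ => ?_
  simp [EdgeLt, word]

lemma bsF_zero {N : ℕ} (Φ : Fin N → List Bool → ℝ) (p : Fin N × (ℕ → Bool)) :
    bsF Φ 0 p = Φ p.1 [] := by
  simp [bsF, word]

lemma bsL_succ {N : ℕ} (Φ : Fin N → List Bool → ℝ)
    (hharm : ∀ (i : Fin N) (w : List Bool), Φ i w = Φ i (w ++ [false]) + Φ i (w ++ [true]))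
    (m : ℕ) (p : Fin N × (ℕ → Bool)) :
    bsL Φ (m+1) p = bsL Φ m p + if p.2 m = true then Φ p.1 (word p.2 m ++ [false]) else 0 := by
  have key : ∀ x : Fin N × (Fin m → Bool),
      (∑ b : Bool, if EdgeLt (x.1, List.ofFn x.2 ++ [b]) (p.1, word p.2 m ++ [p.2 m])
        then Φ x.1 (List.ofFn x.2 ++ [b]) else 0) =
      (if EdgeLt (x.1, List.ofFn x.2) (p.1, word p.2 m) then Φ x.1 (List.ofFn x.2) else 0) +
      (if x = (p.1, fun k : Fin m => p.2 k) then
        (if p.2 m = true then Φ p.1 (word p.2 m ++ [false]) else 0) else 0) := by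
    intro x
    have hl : (List.ofFn x.2).length = (word p.2 m).length := by simp [word]
    simp only [bs_edge_append _ _ _ _ _ _ hl, Fintype.sum_bool]
    by_cases hx : x = (p.1, fun k : Fin m => p.2 k)
    · subst hx
      have : ¬ EdgeLt (p.1, word p.2 m) (p.1, word p.2 m) := by
        simp [EdgeLt, bs_lex_irrefl]
      have h2 : List.ofFn (fun k : Fin m => p.2 k) = word p.2 m := rfl
      simp only [h2, this]
      simp
    · have : ¬ (x.1 = p.1 ∧ List.ofFn x.2 = word p.2 m) := by
        rintro ⟨h1, h2⟩
        exact hx (Prod.ext h1 (List.ofFn_injective h2))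
      rw [if_neg hx]
      by_cases h : EdgeLt (x.1, List.ofFn x.2) (p.1, word p.2 m)
      · simp only [h, true_or, if_true]
        linarith [hharm x.1 (List.ofFn x.2)]
      · rw [if_neg (by tauto), if_neg (by tauto), if_neg h]
  have e1 : bsL Φ (m+1) p = ∑ x : Fin N × (Fin m → Bool), ∑ b : Bool,
      if EdgeLt (x.1, List.ofFn x.2 ++ [b]) (p.1, word p.2 m ++ [p.2 m])
        then Φ x.1 (List.ofFn x.2 ++ [b]) else 0 := by
    unfold bsL
    rw [bs_word_succ, Fintype.sum_prod_type, Fintype.sum_prod_type]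
    refine Finset.sum_congr rfl fun j _ => ?_
    rw [← Equiv.sum_comp (Fin.snocEquiv (fun _ => Bool)), Fintype.sum_prod_type_right]
    refine Finset.sum_congr rfl fun v _ => Finset.sum_congr rfl fun b _ => ?_
    have hs : List.ofFn (Fin.snocEquiv (fun _ => Bool) (b, v)) = List.ofFn v ++ [b] := by
      rw [List.ofFn_succ_last]
      simp [Fin.snocEquiv]
    simp only [hs]
  rw [e1, Finset.sum_congr rfl (fun x _ => key x), Finset.sum_add_distrib]
  simp [bsL]

lemma bsF_succ {N : ℕ} (Φ : Fin N → List Bool → ℝ)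
    (hharm : ∀ (i : Fin N) (w : List Bool), Φ i w = Φ i (w ++ [false]) + Φ i (w ++ [true]))
    (m : ℕ) (p : Fin N × (ℕ → Bool)) :
    bsF Φ (m+1) p = bsF Φ m p - Φ p.1 (word p.2 m ++ [! p.2 m]) := by
  unfold bsF
  rw [bs_word_succ, hharm p.1 (word p.2 m)]
  cases p.2 m <;> simp

/-- interval endpoints in the limit -/
def bsLinf {N : ℕ} (Φ : Fin N → List Bool → ℝ) (p : Fin N × (ℕ → Bool)) : ℝ := ⨆ m, bsL Φ m p


lemma bsL_mono {N : ℕ} (Φ : Fin N → List Bool → ℝ)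
    (hpos : ∀ (i : Fin N) (w : List Bool), 0 < Φ i w)
    (hharm : ∀ (i : Fin N) (w : List Bool), Φ i w = Φ i (w ++ [false]) + Φ i (w ++ [true]))
    (p : Fin N × (ℕ → Bool)) : Monotone (fun m => bsL Φ m p) := by
  refine monotone_nat_of_le_succ fun m => ?_
  simp only [bsL_succ Φ hharm]
  split_ifs
  · linarith [hpos p.1 (word p.2 m ++ [false])]
  · simp

lemma bsF_anti {N : ℕ} (Φ : Fin N → List Bool → ℝ)
    (hpos : ∀ (i : Fin N) (w : List Bool), 0 < Φ i w)
    (hharm : ∀ (i : Fin N) (w : List Bool), Φ i w = Φ i (w ++ [false]) + Φ i (w ++ [true]))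
    (p : Fin N × (ℕ → Bool)) : Antitone (fun m => bsF Φ m p) := by
  refine antitone_nat_of_succ_le fun m => ?_
  simp only [bsF_succ Φ hharm]
  linarith [hpos p.1 (word p.2 m ++ [!p.2 m])]

lemma bsR_anti {N : ℕ} (Φ : Fin N → List Bool → ℝ)
    (hpos : ∀ (i : Fin N) (w : List Bool), 0 < Φ i w)
    (hharm : ∀ (i : Fin N) (w : List Bool), Φ i w = Φ i (w ++ [false]) + Φ i (w ++ [true]))
    (p : Fin N × (ℕ → Bool)) : Antitone (fun m => bsL Φ m p + bsF Φ m p) := by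
  refine antitone_nat_of_succ_le fun m => ?_
  simp only [bsF_succ Φ hharm, bsL_succ Φ hharm]
  have := hpos p.1 (word p.2 m ++ [true])
  cases h : p.2 m <;> simp
  linarith

lemma bsL_zero_nonneg {N : ℕ} (Φ : Fin N → List Bool → ℝ)
    (hpos : ∀ (i : Fin N) (w : List Bool), 0 < Φ i w)
    (hharm : ∀ (i : Fin N) (w : List Bool), Φ i w = Φ i (w ++ [false]) + Φ i (w ++ [true]))
    (p : Fin N × (ℕ → Bool)) : 0 ≤ bsL Φ 0 p := by
  rw [bsL_zero]
  refine Finset.sum_nonneg fun j _ => ?_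
  split_ifs
  · exact (hpos _ _).le
  · simp

lemma bsR_zero {N : ℕ} (Φ : Fin N → List Bool → ℝ)
    (hpos : ∀ (i : Fin N) (w : List Bool), 0 < Φ i w)
    (hharm : ∀ (i : Fin N) (w : List Bool), Φ i w = Φ i (w ++ [false]) + Φ i (w ++ [true]))
    (i : Fin N) : (∑ j : Fin N, if j < i then Φ j [] else 0) + Φ i [] =
    ∑ j : Fin N, if j ≤ i then Φ j [] else 0 := by
  have : Φ i [] = ∑ j : Fin N, if j = i then Φ j [] else 0 := by simp
  rw [this, ← Finset.sum_add_distrib]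
  refine Finset.sum_congr rfl fun j _ => ?_
  rcases lt_trichotomy j i with h | h | h
  · simp [h, h.le, h.ne]
  · simp [h]
  · simp [h.not_gt, h.not_ge, h.ne']

lemma bsR_zero_le {N : ℕ} (Φ : Fin N → List Bool → ℝ)
    (hpos : ∀ (i : Fin N) (w : List Bool), 0 < Φ i w)
    (hharm : ∀ (i : Fin N) (w : List Bool), Φ i w = Φ i (w ++ [false]) + Φ i (w ++ [true]))
    (p : Fin N × (ℕ → Bool)) : bsL Φ 0 p + bsF Φ 0 p ≤ ∑ j, Φ j [] := by
  rw [bsL_zero, bsF_zero, bsR_zero Φ hpos hharm]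
  refine Finset.sum_le_sum fun j _ => ?_
  split_ifs
  · simp
  · exact (hpos _ _).le

lemma bsF_nonneg {N : ℕ} (Φ : Fin N → List Bool → ℝ)
    (hpos : ∀ (i : Fin N) (w : List Bool), 0 < Φ i w)
    (hharm : ∀ (i : Fin N) (w : List Bool), Φ i w = Φ i (w ++ [false]) + Φ i (w ++ [true]))
    (m : ℕ) (p : Fin N × (ℕ → Bool)) : 0 ≤ bsF Φ m p := (hpos _ _).le

lemma bsF_tendsto {N : ℕ} (Φ : Fin N → List Bool → ℝ)
    (hpos : ∀ (i : Fin N) (w : List Bool), 0 < Φ i w)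
    (hharm : ∀ (i : Fin N) (w : List Bool), Φ i w = Φ i (w ++ [false]) + Φ i (w ++ [true]))
    (p : Fin N × (ℕ → Bool)) :
    Tendsto (fun m => bsF Φ m p) atTop (𝓝 (PhiInf Φ p)) := by
  have := tendsto_atTop_ciInf (bsF_anti Φ hpos hharm p)
    ⟨0, by rintro _ ⟨m, rfl⟩; exact bsF_nonneg Φ hpos hharm m p⟩
  exact tendsto_nhds_limUnder ⟨_, this⟩

lemma bsL_bdd {N : ℕ} (Φ : Fin N → List Bool → ℝ)
    (hpos : ∀ (i : Fin N) (w : List Bool), 0 < Φ i w)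
    (hharm : ∀ (i : Fin N) (w : List Bool), Φ i w = Φ i (w ++ [false]) + Φ i (w ++ [true]))
    (p : Fin N × (ℕ → Bool)) : BddAbove (Set.range fun m => bsL Φ m p) := by
  refine ⟨bsL Φ 0 p + bsF Φ 0 p, ?_⟩
  rintro _ ⟨m, rfl⟩
  have := bsR_anti Φ hpos hharm p (Nat.zero_le m)
  have h2 := bsF_nonneg Φ hpos hharm m p
  simp only at this ⊢
  linarith

lemma bsL_tendsto {N : ℕ} (Φ : Fin N → List Bool → ℝ)
    (hpos : ∀ (i : Fin N) (w : List Bool), 0 < Φ i w)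
    (hharm : ∀ (i : Fin N) (w : List Bool), Φ i w = Φ i (w ++ [false]) + Φ i (w ++ [true]))
    (p : Fin N × (ℕ → Bool)) :
    Tendsto (fun m => bsL Φ m p) atTop (𝓝 (bsLinf Φ p)) :=
  tendsto_atTop_ciSup (bsL_mono Φ hpos hharm p) (bsL_bdd Φ hpos hharm p)

lemma bs_Xinf {N : ℕ} (Φ : Fin N → List Bool → ℝ)
    (hpos : ∀ (i : Fin N) (w : List Bool), 0 < Φ i w)
    (hharm : ∀ (i : Fin N) (w : List Bool), Φ i w = Φ i (w ++ [false]) + Φ i (w ++ [true]))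
    (p : Fin N × (ℕ → Bool)) : Xinf Φ p = PhiInf Φ p / 2 + bsLinf Φ p :=
  (((bsF_tendsto Φ hpos hharm p).div_const 2).add (bsL_tendsto Φ hpos hharm p)).limUnder_eq

lemma bs_PhiInf_nonneg {N : ℕ} (Φ : Fin N → List Bool → ℝ)
    (hpos : ∀ (i : Fin N) (w : List Bool), 0 < Φ i w)
    (hharm : ∀ (i : Fin N) (w : List Bool), Φ i w = Φ i (w ++ [false]) + Φ i (w ++ [true]))
    (p : Fin N × (ℕ → Bool)) : 0 ≤ PhiInf Φ p :=
  ge_of_tendsto' (bsF_tendsto Φ hpos hharm p) fun m => bsF_nonneg Φ hpos hharm m p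

lemma bsL_le {N : ℕ} (Φ : Fin N → List Bool → ℝ)
    (hpos : ∀ (i : Fin N) (w : List Bool), 0 < Φ i w)
    (hharm : ∀ (i : Fin N) (w : List Bool), Φ i w = Φ i (w ++ [false]) + Φ i (w ++ [true]))
    (m : ℕ) (p : Fin N × (ℕ → Bool)) : bsL Φ m p ≤ bsLinf Φ p :=
  (bsL_mono Φ hpos hharm p).ge_of_tendsto (bsL_tendsto Φ hpos hharm p) m

lemma bsR_le {N : ℕ} (Φ : Fin N → List Bool → ℝ)
    (hpos : ∀ (i : Fin N) (w : List Bool), 0 < Φ i w)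
    (hharm : ∀ (i : Fin N) (w : List Bool), Φ i w = Φ i (w ++ [false]) + Φ i (w ++ [true]))
    (m : ℕ) (p : Fin N × (ℕ → Bool)) :
    bsLinf Φ p + PhiInf Φ p ≤ bsL Φ m p + bsF Φ m p :=
  (bsR_anti Φ hpos hharm p).le_of_tendsto
    ((bsL_tendsto Φ hpos hharm p).add (bsF_tendsto Φ hpos hharm p)) m

lemma bs_lt {N : ℕ} (Φ : Fin N → List Bool → ℝ)
    (hpos : ∀ (i : Fin N) (w : List Bool), 0 < Φ i w)
    (hharm : ∀ (i : Fin N) (w : List Bool), Φ i w = Φ i (w ++ [false]) + Φ i (w ++ [true]))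
    {p q : Fin N × (ℕ → Bool)} (h : PathLt p q) :
    bsLinf Φ p + PhiInf Φ p ≤ bsLinf Φ q := by
  rcases h with h | ⟨h, n, hn, hp, hq⟩
  · refine (bsR_le Φ hpos hharm 0 p).trans (le_trans ?_ (bsL_le Φ hpos hharm 0 q))
    rw [bsL_zero, bsF_zero, bsR_zero Φ hpos hharm, bsL_zero]
    refine Finset.sum_le_sum fun j _ => ?_
    split_ifs with h1 h2 h2
    · exact le_rfl
    · exact absurd (h1.trans_lt h) h2
    · exact (hpos _ _).le
    · exact le_rfl
  · refine (bsR_le Φ hpos hharm (n+1) p).trans (le_trans ?_ (bsL_le Φ hpos hharm (n+1) q))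
    rw [bsL_succ Φ hharm, bsL_succ Φ hharm, bsL_congr Φ n p q h hn, hp, hq]
    unfold bsF
    rw [bs_word_succ, hp, h, bs_word_congr _ _ n hn]
    simp

lemma bs_XL {N : ℕ} (Φ : Fin N → List Bool → ℝ)
    (hpos : ∀ (i : Fin N) (w : List Bool), 0 < Φ i w)
    (hharm : ∀ (i : Fin N) (w : List Bool), Φ i w = Φ i (w ++ [false]) + Φ i (w ++ [true]))
    {p : Fin N × (ℕ → Bool)} (hp : ¬ RationalPath p) : XL Φ p = bsLinf Φ p := by
  have hup : ∀ x ∈ Xinf Φ '' {q | PathLt q p}, x ≤ bsLinf Φ p := by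
    rintro _ ⟨q, hq, rfl⟩
    have := bs_lt Φ hpos hharm hq
    rw [bs_Xinf Φ hpos hharm]
    linarith [bs_PhiInf_nonneg Φ hpos hharm q]
  have hlow : ∀ m, ∃ x ∈ Xinf Φ '' {q | PathLt q p}, bsL Φ m p ≤ x := by
    intro m
    obtain ⟨n, hn, hpn⟩ : ∃ n ≥ m, p.2 n = true := by
      by_contra! hc
      exact hp ⟨false, m, fun n hn => by simpa using hc n hn⟩
    have hk : ∀ k < n, p.2 k = Function.update p.2 n false k := fun k hk => by
      rw [Function.update_of_ne hk.ne]
    let q : Fin N × (ℕ → Bool) := (p.1, Function.update p.2 n false)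
    refine ⟨_, ⟨q, Or.inr ⟨rfl, n, fun k hk' => (hk k hk').symm, by simp [q], hpn⟩, rfl⟩, ?_⟩
    rw [bs_Xinf Φ hpos hharm]
    have h1 := bs_PhiInf_nonneg Φ hpos hharm q
    have h2 := bsL_le Φ hpos hharm n q
    have h3 : bsL Φ n p = bsL Φ n q := bsL_congr Φ n p q rfl hk
    have h4 := bsL_mono Φ hpos hharm p hn
    simp only at h4
    linarith
  apply le_antisymm
  · obtain ⟨x, hx, -⟩ := hlow 0
    exact csSup_le ⟨x, hx⟩ hup
  · refine le_of_tendsto' (bsL_tendsto Φ hpos hharm p) fun m => ?_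
    obtain ⟨x, hx, h⟩ := hlow m
    exact h.trans (le_csSup ⟨_, hup⟩ hx)

lemma bs_XR {N : ℕ} (Φ : Fin N → List Bool → ℝ)
    (hpos : ∀ (i : Fin N) (w : List Bool), 0 < Φ i w)
    (hharm : ∀ (i : Fin N) (w : List Bool), Φ i w = Φ i (w ++ [false]) + Φ i (w ++ [true]))
    {p : Fin N × (ℕ → Bool)} (hp : ¬ RationalPath p) :
    XR Φ p = bsLinf Φ p + PhiInf Φ p := by
  have hup : ∀ x ∈ Xinf Φ '' {q | PathLt p q}, bsLinf Φ p + PhiInf Φ p ≤ x := by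
    rintro _ ⟨q, hq, rfl⟩
    have := bs_lt Φ hpos hharm hq
    rw [bs_Xinf Φ hpos hharm]
    linarith [bs_PhiInf_nonneg Φ hpos hharm q]
  have hlow : ∀ m, ∃ x ∈ Xinf Φ '' {q | PathLt p q}, x ≤ bsL Φ m p + bsF Φ m p := by
    intro m
    obtain ⟨n, hn, hpn⟩ : ∃ n ≥ m, p.2 n = false := by
      by_contra! hc
      exact hp ⟨true, m, fun n hn => by simpa using hc n hn⟩
    have hk : ∀ k < n, p.2 k = Function.update p.2 n true k := fun k hk => by
      rw [Function.update_of_ne hk.ne]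
    let q : Fin N × (ℕ → Bool) := (p.1, Function.update p.2 n true)
    refine ⟨_, ⟨q, Or.inr ⟨rfl, n, hk, hpn, by simp [q]⟩, rfl⟩, ?_⟩
    rw [bs_Xinf Φ hpos hharm]
    have h1 := bs_PhiInf_nonneg Φ hpos hharm q
    have h2 := bsR_le Φ hpos hharm n q
    have h3 : bsL Φ n p = bsL Φ n q := bsL_congr Φ n p q rfl hk
    have h5 : bsF Φ n p = bsF Φ n q := bsF_congr Φ n p q rfl hk
    have h4 := bsR_anti Φ hpos hharm p hn
    simp only at h4
    linarith
  apply le_antisymm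
  · refine ge_of_tendsto' ((bsL_tendsto Φ hpos hharm p).add (bsF_tendsto Φ hpos hharm p))
      fun m => ?_
    obtain ⟨x, hx, h⟩ := hlow m
    exact (csInf_le ⟨_, hup⟩ hx).trans h
  · obtain ⟨x, hx, -⟩ := hlow 0
    exact le_csInf ⟨x, hx⟩ hup




lemma bs_cover {N : ℕ} (Φ : Fin N → List Bool → ℝ)
    (hpos : ∀ (i : Fin N) (w : List Bool), 0 < Φ i w)
    (hharm : ∀ (i : Fin N) (w : List Bool), Φ i w = Φ i (w ++ [false]) + Φ i (w ++ [true]))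
    (hN : 1 ≤ N) {x : ℝ} (h0 : 0 ≤ x) (hx : x ≤ ∑ j, Φ j []) :
    ∃ p : Fin N × (ℕ → Bool), bsLinf Φ p ≤ x ∧ x ≤ bsLinf Φ p + PhiInf Φ p := by
  let C : ℕ → Set (Fin N × (ℕ → Bool)) := fun m =>
    {p | bsL Φ m p ≤ x ∧ x ≤ bsL Φ m p + bsF Φ m p}
  have hcontr : ∀ m, Continuous
      (fun p : Fin N × (ℕ → Bool) => ((p.1, fun k : Fin m => p.2 k) : Fin N × (Fin m → Bool))) := by
    intro m; fun_prop
  have hcF : ∀ m, Continuous (bsF Φ m) := fun m =>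
    (continuous_of_discreteTopology (f := fun y : Fin N × (Fin m → Bool) =>
      Φ y.1 (List.ofFn y.2))).comp (hcontr m)
  have hcL : ∀ m, Continuous (bsL Φ m) := fun m =>
    (continuous_of_discreteTopology (f := fun y : Fin N × (Fin m → Bool) =>
      ∑ x : Fin N × (Fin m → Bool),
      if EdgeLt (x.1, List.ofFn x.2) (y.1, List.ofFn y.2) then Φ x.1 (List.ofFn x.2)
      else 0)).comp (hcontr m)
  have hclosed : ∀ m, IsClosed (C m) := fun m =>
    (isClosed_le (hcL m) continuous_const).inter
      (isClosed_le continuous_const ((hcL m).add (hcF m)))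
  have hne : ∀ m, (C m).Nonempty := by
    intro m
    induction m with
    | zero =>
      obtain ⟨i, h1, h2⟩ := bs_cover_zero N (fun j => Φ j []) x (by omega) h0 hx
      refine ⟨(i, fun _ => false), ?_⟩
      simp only [C, Set.mem_ofPred_eq, bsL_zero, bsF_zero]
      exact ⟨h1, h2⟩
    | succ m ih =>
      obtain ⟨p, h1, h2⟩ := ih
      let q : Bool → Fin N × (ℕ → Bool) := fun b => (p.1, Function.update p.2 m b)
      have hk : ∀ b, ∀ k < m, (q b).2 k = p.2 k := fun b k hk => by
        simp [q, Function.update_of_ne hk.ne]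
      have hL : ∀ b, bsL Φ m (q b) = bsL Φ m p := fun b => bsL_congr Φ m _ _ rfl (hk b)
      have hF : ∀ b, bsF Φ m (q b) = bsF Φ m p := fun b => bsF_congr Φ m _ _ rfl (hk b)
      have hw : ∀ b, word (q b).2 m = word p.2 m := fun b => bs_word_congr _ _ m (hk b)
      have hqm : ∀ b, (q b).2 m = b := fun b => by simp [q]
      have hq1 : ∀ b, (q b).1 = p.1 := fun b => rfl
      have hh := hharm p.1 (word p.2 m)
      have hFp : bsF Φ m p = Φ p.1 (word p.2 m) := rfl
      by_cases hc : x ≤ bsL Φ m p + Φ p.1 (word p.2 m ++ [false])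
      · refine ⟨q false, ?_⟩
        simp only [C, Set.mem_ofPred_eq, bsL_succ Φ hharm, bsF_succ Φ hharm, hL, hF, hw, hqm, hq1,
          hFp]
        simp
        exact ⟨h1, by linarith⟩
      · refine ⟨q true, ?_⟩
        simp only [C, Set.mem_ofPred_eq, bsL_succ Φ hharm, bsF_succ Φ hharm, hL, hF, hw, hqm, hq1,
          hFp]
        simp
        exact ⟨by linarith, by linarith⟩
  obtain ⟨p, hp⟩ := IsCompact.nonempty_iInter_of_sequence_nonempty_isCompact_isClosed C
    (fun m p hp => ⟨(bsL_mono Φ hpos hharm p (Nat.le_succ m)).trans hp.1,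
      hp.2.trans (bsR_anti Φ hpos hharm p (Nat.le_succ m))⟩) hne (hclosed 0).isCompact hclosed
  rw [Set.mem_iInter] at hp
  exact ⟨p, le_of_tendsto' (bsL_tendsto Φ hpos hharm p) fun m => (hp m).1,
    ge_of_tendsto' ((bsL_tendsto Φ hpos hharm p).add (bsF_tendsto Φ hpos hharm p))
      fun m => (hp m).2⟩

lemma bs_trichotomy {N : ℕ} {p q : Fin N × (ℕ → Bool)} (h : p ≠ q) : PathLt p q ∨ PathLt q p := by
  rcases lt_trichotomy p.1 q.1 with h1 | h1 | h1
  · exact Or.inl (Or.inl h1)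
  · have h2 : ∃ n, p.2 n ≠ q.2 n := by
      by_contra! hc
      exact h (Prod.ext h1 (funext hc))
    have hs := Nat.find_spec h2
    have hm : ∀ k < Nat.find h2, p.2 k = q.2 k := fun k hk => by
      simpa using Nat.find_min h2 hk
    cases hp : p.2 (Nat.find h2) <;> cases hq : q.2 (Nat.find h2)
    · rw [hp, hq] at hs; exact absurd rfl hs
    · exact Or.inl (Or.inr ⟨h1, _, hm, hp, hq⟩)
    · exact Or.inr (Or.inr ⟨h1.symm, _, fun k hk => (hm k hk).symm, hq, hp⟩)
    · rw [hp, hq] at hs; exact absurd rfl hs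
  · exact Or.inr (Or.inl h1)

/-- enumeration of the rational paths -/
def bsRat {N : ℕ} : (((Fin N × List Bool) × Bool) ⊕ (Fin N × Bool)) → Fin N × (ℕ → Bool)
  | Sum.inl x => (x.1.1, extendSeq x.1.2 x.2 (!x.2))
  | Sum.inr x => (x.1, constSeq x.2)

lemma bs_ext_lt (w : List Bool) (b c : Bool) (n : ℕ) (h : n < w.length) :
    extendSeq w b c n = w.get ⟨n, h⟩ := by simp [extendSeq, h]

lemma bs_ext_eq (w : List Bool) (b c : Bool) : extendSeq w b c w.length = b := by simp [extendSeq]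

lemma bs_ext_gt (w : List Bool) (b c : Bool) (n : ℕ) (h : w.length < n) :
    extendSeq w b c n = c := by
  simp [extendSeq, h.not_gt, h.ne']

lemma bs_ext_len (w w' : List Bool) (b b' : Bool)
    (h : extendSeq w b (!b) = extendSeq w' b' (!b')) : ¬ w.length < w'.length := by
  intro hl
  have h1 := congrFun h w'.length
  have h2 := congrFun h (w'.length + 1)
  rw [bs_ext_gt _ _ _ _ hl, bs_ext_eq] at h1
  rw [bs_ext_gt _ _ _ _ (by omega), bs_ext_gt _ _ _ _ (by omega)] at h2
  rw [h1] at h2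
  cases b' <;> simp at h2

lemma bs_ext_const (w : List Bool) (b c : Bool) : extendSeq w b (!b) ≠ constSeq c := by
  intro h
  have h1 := congrFun h w.length
  have h2 := congrFun h (w.length + 1)
  rw [bs_ext_eq] at h1
  rw [bs_ext_gt _ _ _ _ (by omega)] at h2
  simp only [constSeq] at h1 h2
  cases b <;> simp_all

lemma bsRat_inj {N : ℕ} : Function.Injective (bsRat (N := N)) := by
  rintro (⟨⟨i, w⟩, b⟩ | ⟨i, c⟩) (⟨⟨i', w'⟩, b'⟩ | ⟨i', c'⟩) h
  · simp only [bsRat, Prod.mk.injEq] at h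
    obtain ⟨rfl, h⟩ := h
    have hl : w.length = w'.length := by
      have h1 := bs_ext_len _ _ _ _ h
      have h2 := bs_ext_len _ _ _ _ h.symm
      omega
    have hb : b = b' := by
      have := congrFun h w.length
      rw [bs_ext_eq, hl, bs_ext_eq] at this
      exact this
    have hw : w = w' := by
      refine List.ext_get hl fun n h1 h2 => ?_
      have := congrFun h n
      rwa [bs_ext_lt _ _ _ _ h1, bs_ext_lt _ _ _ _ h2] at this
    rw [hb, hw]
  · simp only [bsRat, Prod.mk.injEq] at h
    exact absurd h.2 (bs_ext_const _ _ _)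
  · simp only [bsRat, Prod.mk.injEq] at h
    exact absurd h.2.symm (bs_ext_const _ _ _)
  · simp only [bsRat, Prod.mk.injEq] at h
    obtain ⟨rfl, h⟩ := h
    have := congrFun h 0
    simp only [constSeq] at this
    rw [this]

lemma bsRat_surj {N : ℕ} {p : Fin N × (ℕ → Bool)} (hp : RationalPath p) : ∃ r, bsRat r = p := by
  obtain ⟨c, hc⟩ := hp
  have hs := Nat.find_spec hc
  rcases hm : Nat.find hc with _ | k
  · rw [hm] at hs
    exact ⟨Sum.inr (p.1, c), Prod.ext rfl (funext fun n => (hs n (Nat.zero_le n)).symm)⟩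
  · rw [hm] at hs
    have hk : p.2 k = !c := by
      have := Nat.find_min hc (m := k) (by omega)
      by_contra hne
      refine this fun n hn => ?_
      rcases Nat.lt_or_ge k n with h | h
      · exact hs n h
      · have : n = k := by omega
        rw [this]
        simpa using hne
    refine ⟨Sum.inl ((p.1, word p.2 k), !c), Prod.ext rfl (funext fun n => ?_)⟩
    show extendSeq (word p.2 k) (!c) (!!c) n = p.2 n
    have hl := bs_word_length p.2 k
    rcases lt_trichotomy n k with h | h | h
    · rw [bs_ext_lt _ _ _ _ (by omega)]
      simp [word]
    · subst h
      conv_lhs => rw [← hl]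
      rw [hk]
      have := bs_ext_eq (word p.2 n) (!c) (!!c)
      simpa [hl] using this
    · rw [bs_ext_gt _ _ _ _ (by omega), hs n h]
      simp

lemma bsRat_rational {N : ℕ} (r) : RationalPath (bsRat (N := N) r) := by
  rcases r with ⟨⟨i, w⟩, b⟩ | ⟨i, c⟩
  · exact ⟨!b, w.length + 1, fun n hn => bs_ext_gt _ _ _ _ (show w.length < n by omega)⟩
  · exact ⟨c, 0, fun n _ => rfl⟩


lemma bs_Linf_nonneg {N : ℕ} (Φ : Fin N → List Bool → ℝ)
    (hpos : ∀ (i : Fin N) (w : List Bool), 0 < Φ i w)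
    (hharm : ∀ (i : Fin N) (w : List Bool), Φ i w = Φ i (w ++ [false]) + Φ i (w ++ [true]))
    (p : Fin N × (ℕ → Bool)) : 0 ≤ bsLinf Φ p :=
  (bsL_zero_nonneg Φ hpos hharm p).trans (bsL_le Φ hpos hharm 0 p)

lemma bs_Rinf_le {N : ℕ} (Φ : Fin N → List Bool → ℝ)
    (hpos : ∀ (i : Fin N) (w : List Bool), 0 < Φ i w)
    (hharm : ∀ (i : Fin N) (w : List Bool), Φ i w = Φ i (w ++ [false]) + Φ i (w ++ [true]))
    (p : Fin N × (ℕ → Bool)) : bsLinf Φ p + PhiInf Φ p ≤ ∑ j, Φ j [] :=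
  (bsR_le Φ hpos hharm 0 p).trans (bsR_zero_le Φ hpos hharm p)

lemma bs_disj {N : ℕ} (Φ : Fin N → List Bool → ℝ)
    (hpos : ∀ (i : Fin N) (w : List Bool), 0 < Φ i w)
    (hharm : ∀ (i : Fin N) (w : List Bool), Φ i w = Φ i (w ++ [false]) + Φ i (w ++ [true]))
    {p q : Fin N × (ℕ → Bool)} (h : p ≠ q) {x : ℝ}
    (hx : x ∈ Set.Ioo (bsLinf Φ p) (bsLinf Φ p + PhiInf Φ p))
    (hy : x ∈ Set.Icc (bsLinf Φ q) (bsLinf Φ q + PhiInf Φ q)) : False := by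
  rcases bs_trichotomy h with h | h
  · have := bs_lt Φ hpos hharm h
    linarith [hx.2, hy.1]
  · have := bs_lt Φ hpos hharm h
    linarith [hx.1, hy.2]

lemma bs_Xbar_disj {N : ℕ} (Φ : Fin N → List Bool → ℝ)
    (hpos : ∀ (i : Fin N) (w : List Bool), 0 < Φ i w)
    (hharm : ∀ (i : Fin N) (w : List Bool), Φ i w = Φ i (w ++ [false]) + Φ i (w ++ [true]))
    (hT : 0 < ∑ i : Fin N, Φ i []) {p : Fin N × (ℕ → Bool)} (hp : RationalPath p)
    {x : ℝ} (hx : x ∈ Set.Ioo (bsLinf Φ p) (bsLinf Φ p + PhiInf Φ p)) :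
    (x : AddCircle (∑ i : Fin N, Φ i [])) ∉ XbarInf Φ := by
  have hopen : IsOpen ((fun x : ℝ => (x : AddCircle (∑ i : Fin N, Φ i []))) ''
      Set.Ioo (bsLinf Φ p) (bsLinf Φ p + PhiInf Φ p)) :=
    QuotientAddGroup.isOpenMap_coe _ isOpen_Ioo
  intro hmem
  obtain ⟨z, ⟨y, hy, rfl⟩, hz⟩ := mem_closure_iff.1 hmem _ hopen ⟨x, hx, rfl⟩
  simp only [Set.mem_iUnion] at hz
  obtain ⟨q, hq, u, hu, huy⟩ := hz
  have hq' : ¬ RationalPath q := hq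
  rw [bs_XL Φ hpos hharm hq', bs_XR Φ hpos hharm hq'] at hu
  have hsub : ((u - y : ℝ) : AddCircle (∑ i : Fin N, Φ i [])) = 0 := by
    simp only at huy
    rw [AddCircle.coe_sub, huy, sub_self]
  rw [AddCircle.coe_eq_zero_iff] at hsub
  obtain ⟨n, hn⟩ := hsub
  have a1 := bs_Linf_nonneg Φ hpos hharm p
  have a2 := bs_Rinf_le Φ hpos hharm p
  have a3 := bs_Linf_nonneg Φ hpos hharm q
  have a4 := bs_Rinf_le Φ hpos hharm q
  rw [zsmul_eq_mul] at hn
  have hn1 : (n : ℝ) < 1 := by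
    by_contra! hc
    nlinarith [hu.1, hu.2, hy.1, hy.2]
  have hn2 : (-1 : ℝ) < n := by
    by_contra! hc
    nlinarith [hu.1, hu.2, hy.1, hy.2]
  have hn0 : n = 0 := by
    have h1 : n < 1 := by exact_mod_cast hn1
    have h2 : -1 < n := by exact_mod_cast hn2
    omega
  rw [hn0] at hn
  have huy' : u = y := by simp at hn; linarith
  rw [huy'] at hu
  exact bs_disj Φ hpos hharm (p := p) (q := q) (fun h => hq' (h ▸ hp)) hy hu

lemma bs_measure {N : ℕ} (Φ : Fin N → List Bool → ℝ)
    (hpos : ∀ (i : Fin N) (w : List Bool), 0 < Φ i w)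
    (hharm : ∀ (i : Fin N) (w : List Bool), Φ i w = Φ i (w ++ [false]) + Φ i (w ++ [true]))
    (hN : 1 ≤ N) (hT : 0 < ∑ i : Fin N, Φ i []) :
    volume ((fun x : ℝ => (x : AddCircle (∑ i : Fin N, Φ i []))) ⁻¹' XbarInf Φ ∩
      Set.Ioc 0 (∑ i : Fin N, Φ i [])) +
      ∑' r, ENNReal.ofReal (PhiInf Φ (bsRat r)) = ENNReal.ofReal (∑ i : Fin N, Φ i []) := by
  set A : Set ℝ := (fun x : ℝ => (x : AddCircle (∑ i : Fin N, Φ i []))) ⁻¹' XbarInf Φ ∩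
      Set.Ioc 0 (∑ i : Fin N, Φ i []) with hA
  have hcont : Continuous (fun x : ℝ => (x : AddCircle (∑ i : Fin N, Φ i []))) :=
    AddCircle.continuous_mk' _
  have hvol : volume (Set.Ioc 0 (∑ i : Fin N, Φ i [])) = ENNReal.ofReal (∑ i : Fin N, Φ i []) := by
    simp
  have hclosed : IsClosed (XbarInf Φ) := isClosed_closure
  apply le_antisymm
  · have h1 : ∑' r, ENNReal.ofReal (PhiInf Φ (bsRat r)) = volume (⋃ r : ((Fin N × List Bool) × Bool) ⊕ (Fin N × Bool),
        Set.Ioo (bsLinf Φ (bsRat r)) (bsLinf Φ (bsRat r) + PhiInf Φ (bsRat r))) := by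
      rw [measure_iUnion]
      · simp
      · intro r s hrs
        refine Set.disjoint_left.2 fun x hx hy => ?_
        exact bs_disj Φ hpos hharm (fun h => hrs (bsRat_inj h)) hx (Set.Ioo_subset_Icc_self hy)
      · exact fun _ => measurableSet_Ioo
    rw [h1, ← measure_union, ← hvol]
    · refine measure_mono (Set.union_subset Set.inter_subset_right (Set.iUnion_subset fun r x hx => ?_))
      have a1 := bs_Linf_nonneg Φ hpos hharm (bsRat r)
      have a2 := bs_Rinf_le Φ hpos hharm (bsRat r)
      exact ⟨by linarith [hx.1], by linarith [hx.2]⟩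
    · refine Set.disjoint_left.2 fun x hx hy => ?_
      obtain ⟨r, hr⟩ := Set.mem_iUnion.1 hy
      exact bs_Xbar_disj Φ hpos hharm hT (bsRat_rational r) hr hx.1
    · exact MeasurableSet.iUnion fun _ => measurableSet_Ioo
  · have hsub : Set.Ioc 0 (∑ i : Fin N, Φ i []) ⊆ A ∪ ⋃ r : ((Fin N × List Bool) × Bool) ⊕ (Fin N × Bool),
        Set.Icc (bsLinf Φ (bsRat r)) (bsLinf Φ (bsRat r) + PhiInf Φ (bsRat r)) := by
      intro x hx
      obtain ⟨p, hp1, hp2⟩ := bs_cover Φ hpos hharm hN hx.1.le hx.2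
      by_cases hp : RationalPath p
      · obtain ⟨r, rfl⟩ := bsRat_surj hp
        exact Or.inr (Set.mem_iUnion.2 ⟨r, hp1, hp2⟩)
      · refine Or.inl ⟨subset_closure ?_, hx⟩
        simp only [Set.mem_iUnion]
        refine ⟨p, hp, x, ?_, rfl⟩
        rw [bs_XL Φ hpos hharm hp, bs_XR Φ hpos hharm hp]
        exact ⟨hp1, hp2⟩
    rw [← hvol]
    refine (measure_mono hsub).trans ((measure_union_le _ _).trans ?_)
    gcongr
    refine (measure_iUnion_le _).trans ?_
    simp

lemma bs_final {N : ℕ} (Φ : Fin N → List Bool → ℝ)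
    (hpos : ∀ (i : Fin N) (w : List Bool), 0 < Φ i w)
    (hharm : ∀ (i : Fin N) (w : List Bool), Φ i w = Φ i (w ++ [false]) + Φ i (w ++ [true]))
    {a : ENNReal} (h : a + ∑' r, ENNReal.ofReal (PhiInf Φ (bsRat r)) =
      ENNReal.ofReal (∑ i : Fin N, Φ i [])) :
    a = ENNReal.ofReal (2 * ((∑ i : Fin N, Φ i []) / 2 - TotalGap Φ)) := by
  have hne : ∑' r, ENNReal.ofReal (PhiInf Φ (bsRat r)) ≠ ⊤ := by
    intro hc
    rw [hc, add_top] at h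
    exact ENNReal.ofReal_ne_top h.symm
  have hnn : ∀ r, 0 ≤ PhiInf Φ (bsRat r) := fun r => bs_PhiInf_nonneg Φ hpos hharm _
  have hs : Summable (fun r => PhiInf Φ (bsRat r)) := by
    have := ENNReal.summable_toReal hne
    simpa only [ENNReal.toReal_ofReal (hnn _)] using this
  have hs1 : Summable ((fun r => PhiInf Φ (bsRat r)) ∘ Sum.inl) :=
    hs.comp_injective Sum.inl_injective
  have hs2 : Summable ((fun r => PhiInf Φ (bsRat r)) ∘ Sum.inr) :=
    hs.comp_injective Sum.inr_injective
  have hgap : ∑' r, PhiInf Φ (bsRat r) = 2 * TotalGap Φ := by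
    have hp := hs1.tsum_prod
    simp only [Function.comp] at hp
    rw [hs1.tsum_sum hs2, hp]
    unfold TotalGap
    rw [mul_add, ← tsum_mul_left]
    congr 1
    · refine tsum_congr fun x => ?_
      rw [tsum_bool]
      simp only [Function.comp, bsRat, GapPhi, Bool.not_false, Bool.not_true]
      ring
    · rw [tsum_fintype, Fintype.sum_prod_type]
      simp only [bsRat, Fintype.sum_bool]
      ring
  rw [← ENNReal.ofReal_tsum_of_nonneg hnn hs, hgap] at h
  have h0 : 0 ≤ 2 * TotalGap Φ := hgap ▸ tsum_nonneg hnn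
  have : 2 * ((∑ i : Fin N, Φ i []) / 2 - TotalGap Φ) = (∑ i : Fin N, Φ i []) - 2 * TotalGap Φ := by
    ring
  rw [this, ENNReal.ofReal_sub _ h0, ← h]
  exact (ENNReal.add_sub_cancel_right ENNReal.ofReal_ne_top).symm

/-- **Birman–Series phenomenon.** The Haar measure `λ` on the circle `ℝ/∂Φℤ`,
normalized to have total mass `∂Φ`, gives the set `X̄_∞` the measure
`2 · Error(Φ) = 2 (∂Φ/2 − Gap(Φ))`. -/
theorem birman_series_phenomenon (N : ℕ) (hN : 1 ≤ N) (Φ : Fin N → List Bool → ℝ)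
    (hpos : ∀ (i : Fin N) (w : List Bool), 0 < Φ i w)
    (hharm : ∀ (i : Fin N) (w : List Bool), Φ i w = Φ i (w ++ [false]) + Φ i (w ++ [true]))
    (lam : Measure (AddCircle (∑ i : Fin N, Φ i []))) [lam.IsAddHaarMeasure]
    (hmass : lam Set.univ = ENNReal.ofReal (∑ i : Fin N, Φ i [])) :
    lam (XbarInf Φ) = ENNReal.ofReal (2 * ((∑ i : Fin N, Φ i []) / 2 - TotalGap Φ)) := by
  have hT : 0 < ∑ i : Fin N, Φ i [] :=
    Finset.sum_pos (fun i _ => hpos i []) ⟨⟨0, by omega⟩, Finset.mem_univ _⟩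
  haveI : Fact (0 < ∑ i : Fin N, Φ i []) := ⟨hT⟩
  have hlam : lam = volume := by
    have h := Measure.isAddLeftInvariant_eq_smul lam volume
    have h1 : lam Set.univ = (lam.addHaarScalarFactor volume : ENNReal) *
        (volume : Measure (AddCircle (∑ i : Fin N, Φ i []))) Set.univ := by
      conv_lhs => rw [h]
      rfl
    rw [hmass, AddCircle.measure_univ] at h1
    have h2 : (lam.addHaarScalarFactor volume : ENNReal) = 1 := by
      have h3 : ENNReal.ofReal (∑ i : Fin N, Φ i []) ≠ 0 := by simpa using hT
      have h4 := ENNReal.ofReal_ne_top (r := ∑ i : Fin N, Φ i [])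
      rw [← ENNReal.mul_left_inj h3 h4, ← h1, one_mul]
    have h5 : lam.addHaarScalarFactor volume = 1 := by exact_mod_cast h2
    rw [h, h5, one_smul]
  have hclosed : IsClosed (XbarInf Φ) := isClosed_closure
  rw [hlam, AddCircle.add_projection_respects_measure _ 0 hclosed.measurableSet, zero_add]
  exact bs_final Φ hpos hharm (bs_measure Φ hpos hharm hN hT)
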